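/- Let a ≠ 0, a₁ ≠ 0, ω > 0 and b = a₂²/(4a₁). The characteristic polynomial det(λ·I − J(p)) of the Jacobian of the Chua system at the equilibrium p = (−a₂/(2a₁), −a₂b₁/(2a₁), 0) equals λ·(λ² + ω²) (equivalently, p is a zero-Hopf equilibrium with eigenvalues 0 and ±iω) if and only if b₂ = 0 and b₁ = (ω² − 1)/a. -/

import Mathlib

open Polynomial

/-!
For `b = a₂² / (4a₁)` the cubic `b x + a₂ x² + a₁ x³` equals `a₁ x (x + a₂ / (2a₁))²`, so
`x = -a₂ / (2a₁)` is a double root and the derivative `b + 2a₂ x + 3a₁ x²` vanishes there. This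
kills the upper left entry of the Jacobian, whose characteristic polynomial becomes
`X (X² - b₂ X + (1 + a b₁))`; it remains to compare coefficients with `X (X² + ω²)`.
-/

theorem X_sq_sub_C_mul_X_add_C_eq_X_sq_add_C_iff {R : Type*} [Ring R] {s p q : R} :
    X ^ 2 - C s * X + C p = X ^ 2 + C q ↔ s = 0 ∧ p = q := by
  constructor
  · intro h
    have coeff_zero : p = q := by simpa using congrArg (coeff · 0) h
    have coeff_one : s = 0 := by simpa [coeff_X_pow, coeff_C] using congrArg (coeff · 1) h
    exact ⟨coeff_one, coeff_zero⟩
  · rintro ⟨rfl, rfl⟩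
    rw [C_0, zero_mul, sub_zero]

section CommRing

variable {R : Type*} [CommRing R]

/-- The Jacobian matrix of the Chua system at a point `(x, y, z)`. It does not depend on `y` and
`z`, so only `x` is an argument. -/
def chuaJacobian (a a₁ a₂ b b₁ b₂ x : R) : Matrix (Fin 3) (Fin 3) R :=
  !![a * (-b - 2 * a₂ * x - 3 * a₁ * x ^ 2), 0, a;
     0, 0, -1;
     -b₁, 1, b₂]

theorem charpoly_chuaJacobian (a a₁ a₂ b b₁ b₂ x : R) :
    (chuaJacobian a a₁ a₂ b b₁ b₂ x).charpoly =
      (X - C (a * (-b - 2 * a₂ * x - 3 * a₁ * x ^ 2))) * (X ^ 2 - C b₂ * X + 1) +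
        C (a * b₁) * X := by
  have charmatrix_eq : (chuaJacobian a a₁ a₂ b b₁ b₂ x).charmatrix =
      !![X - C (a * (-b - 2 * a₂ * x - 3 * a₁ * x ^ 2)), 0, -C a;
         0, X, 1;
         C b₁, -1, X - C b₂] := by
    ext1 i j
    fin_cases i <;> fin_cases j <;> simp [chuaJacobian]
  rw [Matrix.charpoly, charmatrix_eq, Matrix.det_fin_three, C_mul (a := a) (b := b₁)]
  simp only [Matrix.of_apply, Matrix.cons_val]
  ring

theorem charpoly_chuaJacobian_of_deriv_eq_zero {a₁ a₂ b x : R}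
    (hx : b + 2 * a₂ * x + 3 * a₁ * x ^ 2 = 0) (a b₁ b₂ : R) :
    (chuaJacobian a a₁ a₂ b b₁ b₂ x).charpoly = X * (X ^ 2 - C b₂ * X + C (1 + a * b₁)) := by
  have entry_eq_zero : a * (-b - 2 * a₂ * x - 3 * a₁ * x ^ 2) = 0 := by
    linear_combination -a * hx
  rw [charpoly_chuaJacobian, entry_eq_zero, C_0, C_add, C_1]
  ring

end CommRing

section Field

variable {K : Type*} [Field K] [NeZero (2 : K)]

theorem chua_cubic_deriv_eq_zero {a₁ : K} (ha₁ : a₁ ≠ 0) (a₂ : K) :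
    a₂ ^ 2 / (4 * a₁) + 2 * a₂ * (-a₂ / (2 * a₁)) + 3 * a₁ * (-a₂ / (2 * a₁)) ^ 2 = 0 := by
  rw [show (4 : K) = 2 * 2 by norm_num]
  field_simp
  ring

theorem chua_p_zeroHopf_iff_general {a a₁ a₂ b b₁ b₂ ω : K} (ha : a ≠ 0) (ha₁ : a₁ ≠ 0)
    (hb : b = a₂ ^ 2 / (4 * a₁)) :
    (chuaJacobian a a₁ a₂ b b₁ b₂ (-a₂ / (2 * a₁))).charpoly = X * (X ^ 2 + C (ω ^ 2)) ↔
      b₂ = 0 ∧ b₁ = (ω ^ 2 - 1) / a := by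
  subst hb
  rw [charpoly_chuaJacobian_of_deriv_eq_zero (chua_cubic_deriv_eq_zero ha₁ a₂),
    mul_right_inj' X_ne_zero, X_sq_sub_C_mul_X_add_C_eq_X_sq_add_C_iff,
    eq_div_iff ha, eq_sub_iff_add_eq', mul_comm b₁]

end Field

/-- Let `a ≠ 0`, `a₁ ≠ 0`, `ω > 0` and `b = a₂²/(4a₁)`. The characteristic polynomial of
the Jacobian `J(p) = [[a(−b − 2a₂x − 3a₁x²), 0, a], [0, 0, −1], [−b₁, 1, b₂]]` of the Chua
system at the equilibrium `p = (−a₂/(2a₁), −a₂b₁/(2a₁), 0)` (so `x = −a₂/(2a₁)`) equals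
`λ·(λ² + ω²)` (i.e. `p` is a zero-Hopf equilibrium with eigenvalues `0, ±iω`) if and only
if `b₂ = 0` and `b₁ = (ω² − 1)/a`. -/
theorem chua_p_zeroHopf_iff (a a₁ a₂ b b₁ b₂ ω : ℝ) (ha : a ≠ 0) (ha₁ : a₁ ≠ 0)
    (hω : 0 < ω) (hb : b = a₂ ^ 2 / (4 * a₁)) :
    (!![a * (-b - 2 * a₂ * (-a₂ / (2 * a₁)) - 3 * a₁ * (-a₂ / (2 * a₁)) ^ 2), 0, a;
        0, 0, -1;
        -b₁, 1, b₂] : Matrix (Fin 3) (Fin 3) ℝ).charpoly = X * (X ^ 2 + C (ω ^ 2)) ↔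
      b₂ = 0 ∧ b₁ = (ω ^ 2 - 1) / a :=
  chua_p_zeroHopf_iff_general ha ha₁ hb
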